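/- Let P be an n×n real symmetric positive definite matrix, C an n_z×n real matrix, and γ > 0 a real number. Then trace(C·P·Cᵀ) < γ² if and only if there exists an n_z×n_z real symmetric positive definite matrix Q such that the block matrix [[-Q, C], [Cᵀ, -P⁻¹]] is negative definite and trace(Q) < γ². -/

import Mathlib

open Matrix

/-- A real symmetric matrix `M` is negative definite if `xᵀ M x < 0` for all `x ≠ 0`. -/
def NegDef {n : Type*} [Fintype n] (M : Matrix n n ℝ) : Prop :=
  M.IsSymm ∧ ∀ x : n → ℝ, x ≠ 0 → x ⬝ᵥ M.mulVec x < 0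

/-!
Since `-[[-Q, C], [Cᴴ, -P⁻¹]]` has the positive definite lower right block `P⁻¹`, it is positive
definite exactly when its Schur complement `Q - C P Cᴴ` is. By monotonicity of the trace,
`Q - C P Cᴴ > 0` and `tr Q < c` force `tr (C P Cᴴ) < c`; conversely, the gap
`c - tr (C P Cᴴ)` leaves room for `Q = C P Cᴴ + ε I` with a small `ε > 0`.
-/

theorem negDef_iff_posDef_neg {n : Type*} [Fintype n] {M : Matrix n n ℝ} :
    NegDef M ↔ (-M).PosDef := by
  simp [NegDef, posDef_iff_dotProduct_mulVec, isHermitian_iff_isSymm, neg_mulVec, IsSymm]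

section RCLike

open scoped ComplexOrder

variable {m n 𝕜 : Type*} [RCLike 𝕜]

theorem posDef_fromBlocks₂₂_iff [Finite m] [Fintype n] [DecidableEq n]
    (A : Matrix m m 𝕜) (B : Matrix m n 𝕜) {D : Matrix n n 𝕜} (hD : D.PosDef) :
    (fromBlocks A B Bᴴ D).PosDef ↔ (A - B * D⁻¹ * Bᴴ).PosDef := by
  classical
  have := Fintype.ofFinite m
  let _ : Invertible D := hD.isUnit.invertible
  have posSemidef_iff := PosDef.fromBlocks₂₂ A B hD
  have isUnit_iff : IsUnit (fromBlocks A B Bᴴ D) ↔ IsUnit (A - B * D⁻¹ * Bᴴ) := by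
    rw [isUnit_fromBlocks_iff_of_invertible₂₂, invOf_eq_nonsing_inv]
  constructor
  · intro h
    exact (posSemidef_iff.mp h.posSemidef).posDef_iff_isUnit.mpr (isUnit_iff.mp h.isUnit)
  · intro h
    exact (posSemidef_iff.mpr h.posSemidef).posDef_iff_isUnit.mpr (isUnit_iff.mpr h.isUnit)

theorem trace_lt_iff_exists_posDef_sub [Fintype m] {S : Matrix m m 𝕜} {c : 𝕜} :
    S.trace < c ↔ ∃ Q : Matrix m m 𝕜, (Q - S).PosDef ∧ Q.trace < c := by
  classical
  constructor
  · intro hS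
    have card_pos : (0 : 𝕜) < Fintype.card m + 1 := by positivity
    set ε : 𝕜 := (c - S.trace) / (Fintype.card m + 1) with hε
    have ε_pos : 0 < ε := div_pos (sub_pos.mpr hS) card_pos
    refine ⟨S + ε • 1, ?_, ?_⟩
    · rw [add_sub_cancel_left]
      exact PosDef.one.smul ε_pos
    · calc (S + ε • (1 : Matrix m m 𝕜)).trace
          = S.trace + ε * Fintype.card m := by rw [trace_add, trace_smul, trace_one, smul_eq_mul]
        _ < S.trace + ε * (Fintype.card m + 1) := by gcongr; exact lt_add_one _
        _ = c := by rw [hε, div_mul_cancel₀ _ card_pos.ne', add_sub_cancel]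
  · rintro ⟨Q, hQS, hQ⟩
    have trace_le : S.trace ≤ Q.trace := by
      rw [← sub_nonneg, ← trace_sub]
      exact hQS.posSemidef.trace_nonneg
    exact trace_le.trans_lt hQ

theorem trace_constraint_lmi_general [Fintype m] [Fintype n] [DecidableEq n]
    {P : Matrix n n 𝕜} (hP : P.PosDef) (C : Matrix m n 𝕜) (c : 𝕜) :
    (C * P * Cᴴ).trace < c ↔
      ∃ Q : Matrix m m 𝕜, Q.PosDef ∧ (-fromBlocks (-Q) C Cᴴ (-P⁻¹)).PosDef ∧ Q.trace < c := by
  have lmi_iff (Q : Matrix m m 𝕜) :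
      (-fromBlocks (-Q) C Cᴴ (-P⁻¹)).PosDef ↔ (Q - C * P * Cᴴ).PosDef := by
    let _ : Invertible P := hP.isUnit.invertible
    simpa [fromBlocks_neg] using posDef_fromBlocks₂₂_iff Q (-C) hP.inv
  have posDef_of_sub {Q : Matrix m m 𝕜} (hQ : (Q - C * P * Cᴴ).PosDef) : Q.PosDef := by
    simpa using hQ.add_posSemidef (hP.posSemidef.mul_mul_conjTranspose_same C)
  simp only [lmi_iff, trace_lt_iff_exists_posDef_sub (S := C * P * Cᴴ)]
  exact exists_congr fun Q ↦ ⟨fun h ↦ ⟨posDef_of_sub h.1, h⟩, And.right⟩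

end RCLike

/-- Trace-constraint reformulation: for `P` symmetric positive definite and `γ > 0`,
`trace (C P Cᵀ) < γ²` iff there is a symmetric positive definite `Q` with
`[[-Q, C], [Cᵀ, -P⁻¹]]` negative definite and `trace Q < γ²`. -/
theorem trace_constraint_lmi {n nz : ℕ}
    (P : Matrix (Fin n) (Fin n) ℝ) (C : Matrix (Fin nz) (Fin n) ℝ)
    (γ : ℝ) (hP : P.PosDef) (hγ : 0 < γ) :
    (C * P * Cᵀ).trace < γ ^ 2 ↔
      ∃ Q : Matrix (Fin nz) (Fin nz) ℝ, Q.PosDef ∧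
        NegDef (fromBlocks (-Q) C Cᵀ (-P⁻¹)) ∧ Q.trace < γ ^ 2 := by
  simpa only [negDef_iff_posDef_neg, conjTranspose_eq_transpose_of_trivial]
    using trace_constraint_lmi_general hP C (γ ^ 2)
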